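/- Let d ≥ 3, let Ω ⊂ ℝ^d be a bounded open set with diameter h_Ω, and let d(x) denote the Euclidean distance from x ∈ Ω to the complement of Ω. Let K_1, …, K_N be a finite partition of Ω into Lebesgue-measurable sets and let ρ_1, …, ρ_N > 0 be constants defining ρ : Ω → ℝ by ρ = ρ_i on K_i, with ∫_Ω ρ dx = 1; write |K_i| for the Lebesgue measure of K_i and d_{K_i} = sup_{x ∈ K_i} d(x). Let C₀ > 0 and let G : Ω × Ω → ℝ be measurable with 0 ≤ G(x,ξ) ≤ C₀ |x−ξ|^{2−d} min{1, d(x)d(ξ)/|x−ξ|²} for all x ≠ ξ in Ω. Fix p ∈ (1, d/(d−2)) and set q = p/(p−1). Suppose λ > 0 and u : Ω → ℝ is measurable, u > 0 almost everywhere, 0 < ∫_Ω ρ^q u^q dx < ∞, and u(x) = λ ∫_Ω G(x,ξ) ρ(ξ) u(ξ) dξ for almost every x ∈ Ω. Then there exists a constant C > 0, depending only on d, C₀ and h_Ω (but not on p, the partition, ρ, u or λ), such that λ ≥ C · ( d/(d−2) − p )^{d/(d+2p)} · ( Σ_{i=1}^N ρ_i^q |K_i| d_{K_i}^{ q(d−(d−2)p)/(d+2p)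 } )^{−1/q}. -/

import Mathlib

open MeasureTheory

/-!
Write `ε = d - (d - 2) p > 0` and `δ = d(x)`. Near `x` the Green's function is bounded by
`|x - ξ|^(2-d)`, whose `p`-th power integrates to a multiple of `r ^ ε / ε` over the ball of radius
`r`; away from `x` it is bounded by a multiple of `δ |x - ξ|^(-d)`, hence of `δ r^(-d)`. Choosing
`r` such that `(δ r^(-d))^p = r ^ ε / ε` gives
`‖G(x, ·)‖_p ≤ C (d/(d-2) - p)^(-d/(d+2p)) δ^(ε/(d+2p))`.
Hölder's inequality in `u = λ ∫ G ρ u` bounds `|u(x)|` by `|λ| ‖G(x, ·)‖_p ‖ρ u‖_q`. Multiplying by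
`|ρ(x)|`, taking `L^q` norms and cancelling `‖ρ u‖_q ∈ (0, ∞)` leaves `1 ≤ |λ| ‖ρ ‖G(x, ·)‖_p‖_q`.
-/

open Metric Module
open scoped ENNReal

section RadialIntegrals

variable {E F : Type*} [NormedAddCommGroup E] [NormedSpace ℝ E] [FiniteDimensional ℝ E]
  [Nontrivial E] [MeasurableSpace E] [BorelSpace E] (μ : Measure E) [μ.IsAddHaarMeasure]
  [NormedAddCommGroup F] [NormedSpace ℝ F]

lemma setIntegral_ball_fun_norm_addHaar (f : ℝ → F) (r : ℝ) :
    ∫ x in ball (0 : E) r, f ‖x‖ ∂μ =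
      finrank ℝ E • μ.real (ball 0 1) • ∫ y in Set.Ioo 0 r, y ^ (finrank ℝ E - 1) • f y := by
  have h_ball : (ball (0 : E) r).indicator (fun x ↦ f ‖x‖) =
      fun x ↦ (Set.Iio r).indicator f ‖x‖ := by
    ext x
    simp [Set.indicator]
  have h_smul : (fun y : ℝ ↦ y ^ (finrank ℝ E - 1) • (Set.Iio r).indicator f y) =
      (Set.Iio r).indicator fun y ↦ y ^ (finrank ℝ E - 1) • f y := by
    ext y
    by_cases hy : y < r <;> simp [hy]
  rw [← integral_indicator measurableSet_ball, h_ball, integral_fun_norm_addHaar, h_smul,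
    setIntegral_indicator measurableSet_Iio, Set.Ioi_inter_Iio]

lemma setLIntegral_ball_dist_rpow_neg {s r : ℝ} (hs : s < finrank ℝ E) (hr : 0 ≤ r) (x : E) :
    ∫⁻ ξ in ball x r, ENNReal.ofReal (dist x ξ ^ (-s)) ∂μ =
      ENNReal.ofReal (finrank ℝ E * μ.real (ball 0 1) *
        (r ^ (finrank ℝ E - s) / (finrank ℝ E - s))) := by
  have h_jacobian : Set.EqOn (fun y : ℝ ↦ y ^ (finrank ℝ E - 1) • y ^ (-s))
      (fun y ↦ y ^ (finrank ℝ E - s - 1)) (Set.Ioo 0 r) := by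
    intro y hy
    simp only [smul_eq_mul]
    rw [← Real.rpow_natCast, ← Real.rpow_add hy.1, Nat.cast_sub finrank_pos, Nat.cast_one]
    ring_nf
  have h_exponent : -1 < (finrank ℝ E : ℝ) - s - 1 := by linarith
  have h_integrable : IntegrableOn (fun ξ : E ↦ ‖ξ‖ ^ (-s)) (ball 0 r) μ := by
    rw [integrableOn_fun_norm_addHaar μ (f := fun y ↦ y ^ (-s)),
      integrableOn_congr_fun h_jacobian measurableSet_Ioo,
      ← intervalIntegrable_iff_integrableOn_Ioo_of_le hr]
    exact intervalIntegral.intervalIntegrable_rpow' h_exponent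
  have h_value : ∫ ξ in ball (0 : E) r, ‖ξ‖ ^ (-s) ∂μ =
      finrank ℝ E * μ.real (ball 0 1) * (r ^ (finrank ℝ E - s) / (finrank ℝ E - s)) := by
    rw [setIntegral_ball_fun_norm_addHaar μ (fun y ↦ y ^ (-s)),
      setIntegral_congr_fun measurableSet_Ioo h_jacobian, ← integral_Ioc_eq_integral_Ioo,
      ← intervalIntegral.integral_of_le hr, integral_rpow (.inl h_exponent), sub_add_cancel,
      Real.zero_rpow (sub_pos.2 hs).ne', sub_zero, nsmul_eq_mul, smul_eq_mul, mul_assoc]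
  have h_translate : ∫⁻ ξ in ball x r, ENNReal.ofReal (dist x ξ ^ (-s)) ∂μ =
      ∫⁻ ξ in ball (0 : E) r, ENNReal.ofReal (‖ξ‖ ^ (-s)) ∂μ := by
    rw [← lintegral_indicator measurableSet_ball, ← lintegral_indicator measurableSet_ball,
      ← lintegral_add_left_eq_self _ x]
    congr 1 with ξ
    simp [Set.indicator]
  rw [h_translate, ← h_value, ofReal_integral_eq_lintegral_ofReal h_integrable
    (.of_forall fun ξ ↦ Real.rpow_nonneg (norm_nonneg ξ) _)]

end RadialIntegrals

section BoundedSets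

variable {E : Type*} [NormedAddCommGroup E] [NormedSpace ℝ E] {Ω : Set E}

lemma infDist_compl_le_diam [Nontrivial E] (hΩ : Bornology.IsBounded Ω) {x : E} (hx : x ∈ Ω) :
    infDist x Ωᶜ ≤ diam Ω := by
  obtain ⟨v, hv⟩ := exists_norm_eq E (infDist_nonneg : 0 ≤ infDist x Ωᶜ)
  have h_mem : x + v ∈ closure Ω :=
    closedBall_infDist_compl_subset_closure hx (by simp [hv])
  calc infDist x Ωᶜ = dist (x + v) x := by simp [hv]
    _ ≤ diam (closure Ω) := dist_le_diam_of_mem hΩ.closure h_mem (subset_closure hx)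
    _ = diam Ω := diam_closure Ω

variable [FiniteDimensional ℝ E] [MeasurableSpace E] [BorelSpace E]
  (μ : Measure E) [μ.IsAddHaarMeasure]

lemma addHaar_le_of_diam_le {h : ℝ} (hΩ : Bornology.IsBounded Ω) (hh : diam Ω ≤ h) :
    μ Ω ≤ ENNReal.ofReal (μ.real (ball 0 1) * h ^ finrank ℝ E) := by
  obtain rfl | ⟨x, hx⟩ := Ω.eq_empty_or_nonempty
  · simp
  have h_subset : Ω ⊆ closedBall x h := fun y hy ↦ (dist_le_diam_of_mem hΩ hy hx).trans hh
  calc μ Ω ≤ μ (closedBall x h) := measure_mono h_subset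
    _ = _ := by
      rw [Measure.addHaar_closedBall _ _ (diam_nonneg.trans hh), mul_comm,
        ENNReal.ofReal_mul measureReal_nonneg, ofReal_measureReal measure_ball_lt_top.ne]

lemma lintegral_rpow_le_of_le_near_of_le_far [Nontrivial E] {f : E → ℝ} {x : E}
    {a b B p r : ℝ} (hΩ : MeasurableSet Ω) (hf : ∀ ξ ∈ Ω, 0 ≤ f ξ) (hb : 0 ≤ b) (hB : 0 ≤ B)
    (hp : 0 ≤ p) (hap : a * p < finrank ℝ E) (hr : 0 < r)
    (h_near : ∀ ξ ∈ Ω, f ξ ≤ dist x ξ ^ (-a)) (h_far : ∀ ξ ∈ Ω, f ξ ≤ B * dist x ξ ^ (-b)) :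
    ∫⁻ ξ in Ω, ENNReal.ofReal (f ξ) ^ p ∂μ ≤
      ENNReal.ofReal (finrank ℝ E * μ.real (ball 0 1) *
        (r ^ (finrank ℝ E - a * p) / (finrank ℝ E - a * p))) +
      ENNReal.ofReal ((B * r ^ (-b)) ^ p) * μ Ω := by
  rw [← lintegral_inter_add_sdiff _ Ω (measurableSet_ball (x := x) (ε := r))]
  gcongr ?_ + ?_
  · rw [← setLIntegral_ball_dist_rpow_neg μ hap hr.le x]
    refine (setLIntegral_mono' (hΩ.inter measurableSet_ball) fun ξ hξ ↦ ?_).trans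
      (lintegral_mono_set Set.inter_subset_right)
    rw [ENNReal.ofReal_rpow_of_nonneg (hf ξ hξ.1) hp, ← neg_mul, Real.rpow_mul dist_nonneg]
    have := hf ξ hξ.1
    have := h_near ξ hξ.1
    gcongr
  · calc ∫⁻ ξ in Ω \ ball x r, ENNReal.ofReal (f ξ) ^ p ∂μ
        ≤ ∫⁻ _ in Ω \ ball x r, ENNReal.ofReal ((B * r ^ (-b)) ^ p) ∂μ := by
          refine setLIntegral_mono measurable_const fun ξ hξ ↦ ?_
          have h_dist : r ≤ dist x ξ := by simpa [dist_comm] using hξ.2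
          have h_le : f ξ ≤ B * r ^ (-b) := (h_far ξ hξ.1).trans <|
            mul_le_mul_of_nonneg_left (Real.rpow_le_rpow_of_nonpos hr h_dist (by simpa)) hB
          rw [← ENNReal.ofReal_rpow_of_nonneg (by positivity) hp]
          gcongr
      _ ≤ ENNReal.ofReal ((B * r ^ (-b)) ^ p) * μ Ω := by
          rw [setLIntegral_const]
          gcongr
          exact Set.sdiff_subset

end BoundedSets

section CutoffRadius

/-- The radius `r` separating near field from far field at a point of depth `δ` in dimension `D`:
it solves `(δ r⁻ᴰ)ᵖ = r ^ ε / ε` with `ε = D - (D - 2) p`, which makes the two contributions to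
the `Lᵖ` norm of the Green majorant comparable. -/
noncomputable def cutoffRadius (D p δ : ℝ) : ℝ :=
  ((D - (D - 2) * p) * δ ^ p) ^ (1 / (D + 2 * p))

variable {D p δ : ℝ}

lemma cutoffRadius_pos (hε : 0 < D - (D - 2) * p) (hδ : 0 < δ) : 0 < cutoffRadius D p δ := by
  unfold cutoffRadius
  positivity

lemma cutoffRadius_rpow (hD : 0 < D) (hp : 0 < p) (hε : 0 < D - (D - 2) * p) (hδ : 0 < δ) :
    cutoffRadius D p δ ^ (D + 2 * p) = (D - (D - 2) * p) * δ ^ p := by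
  rw [cutoffRadius, ← Real.rpow_mul (by positivity), one_div_mul_cancel (by positivity),
    Real.rpow_one]

lemma mul_cutoffRadius_rpow_neg_rpow (hD : 0 < D) (hp : 0 < p) (hε : 0 < D - (D - 2) * p)
    (hδ : 0 < δ) :
    (δ * cutoffRadius D p δ ^ (-D)) ^ p =
      cutoffRadius D p δ ^ (D - (D - 2) * p) / (D - (D - 2) * p) := by
  have hr := cutoffRadius_pos hε hδ
  have h_exponent : D - (D - 2) * p = (D + 2 * p) + -D * p := by ring
  rw [Real.mul_rpow hδ.le (by positivity), ← Real.rpow_mul hr.le, eq_div_iff hε.ne']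
  nth_rw 2 [h_exponent]
  rw [Real.rpow_add hr, cutoffRadius_rpow hD hp hε hδ]
  ring

lemma cutoffRadius_rpow_div_rpow (hD : 0 < D) (hp : 0 < p) (hε : 0 < D - (D - 2) * p)
    (hδ : 0 < δ) :
    (cutoffRadius D p δ ^ (D - (D - 2) * p) / (D - (D - 2) * p)) ^ (1 / p) =
      (D - (D - 2) * p) ^ (-(D / (D + 2 * p))) * δ ^ ((D - (D - 2) * p) / (D + 2 * p)) := by
  have hr := cutoffRadius_pos hε hδ
  have h_ne : D + 2 * p ≠ 0 := by positivity
  have h_depth : (δ * cutoffRadius D p δ ^ (-D)) ^ (p * (1 / p)) =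
      δ * cutoffRadius D p δ ^ (-D) := by
    rw [mul_one_div_cancel hp.ne', Real.rpow_one]
  rw [← mul_cutoffRadius_rpow_neg_rpow hD hp hε hδ, ← Real.rpow_mul (by positivity), h_depth,
    cutoffRadius, ← Real.rpow_mul (by positivity), Real.mul_rpow hε.le (by positivity),
    ← Real.rpow_mul hδ.le, mul_comm δ, mul_assoc, ← Real.rpow_add_one hδ.ne']
  congr 2 <;> field_simp
  ring

end CutoffRadius

section GreenMajorant

variable {E : Type*} [PseudoMetricSpace E]

/-- The Riesz-type majorant `|x - ξ|^(2-D) min {1, d(x) d(ξ) / |x - ξ|²}` of the Dirichlet Green's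
function of `Ω`, where `d` is the distance to the complement of `Ω` and the real parameter `D`
stands for the dimension. It vanishes on the diagonal, since `y / 0 = 0`. -/
noncomputable def greenMajorant (D : ℝ) (Ω : Set E) (x ξ : E) : ℝ :=
  dist x ξ ^ (2 - D) * min 1 (infDist x Ωᶜ * infDist ξ Ωᶜ / dist x ξ ^ 2)

lemma greenMajorant_nonneg (D : ℝ) (Ω : Set E) (x ξ : E) : 0 ≤ greenMajorant D Ω x ξ :=
  mul_nonneg (by positivity) <| le_min zero_le_one <|
    div_nonneg (mul_nonneg infDist_nonneg infDist_nonneg) (by positivity)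

lemma greenMajorant_of_infDist_eq_zero (D : ℝ) {Ω : Set E} {x : E} (hx : infDist x Ωᶜ = 0)
    (ξ : E) : greenMajorant D Ω x ξ = 0 := by
  simp [greenMajorant, hx]

lemma greenMajorant_le_dist_rpow (D : ℝ) (Ω : Set E) (x ξ : E) :
    greenMajorant D Ω x ξ ≤ dist x ξ ^ (-(D - 2)) := by
  rw [neg_sub]
  exact mul_le_of_le_one_right (by positivity) (min_le_left _ _)

lemma greenMajorant_le_infDist_mul_dist_rpow (D : ℝ) {Ω : Set E} (x : E) {ξ : E} {h : ℝ}
    (hξ : infDist ξ Ωᶜ ≤ h) :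
    greenMajorant D Ω x ξ ≤ infDist x Ωᶜ * h * dist x ξ ^ (-D) := by
  have hx : 0 ≤ infDist x Ωᶜ := infDist_nonneg
  have hh : 0 ≤ h := infDist_nonneg.trans hξ
  obtain h_dist | h_dist := (dist_nonneg : 0 ≤ dist x ξ).eq_or_lt
  · simpa [greenMajorant, ← h_dist] using by positivity
  calc greenMajorant D Ω x ξ
      ≤ dist x ξ ^ (2 - D) * (infDist x Ωᶜ * infDist ξ Ωᶜ / dist x ξ ^ 2) :=
        mul_le_mul_of_nonneg_left (min_le_right _ _) (by positivity)
    _ ≤ dist x ξ ^ (2 - D) * (infDist x Ωᶜ * h / dist x ξ ^ 2) := by gcongr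
    _ = infDist x Ωᶜ * h * dist x ξ ^ (-D) := by
        rw [sub_eq_add_neg, Real.rpow_add h_dist, Real.rpow_two]
        field_simp

end GreenMajorant

section GreenMajorantLpNorm

/-- The constant in the `Lᵖ` bound for the Green majorant of a domain of diameter at most `h` in
dimension `d`. The second summand is the near-field contribution and the third, where `h ^ 3`
bounds `h ^ p`, the far-field one; the summand `1` makes the constant dominate its own `p`-th
root. -/
noncomputable def greenConst {E : Type*} [SeminormedAddCommGroup E] [MeasurableSpace E]
    (μ : Measure E) (d : ℕ) (h : ℝ) : ℝ :=
  1 + (d * μ.real (ball 0 1) + μ.real (ball 0 1) * h ^ d * h ^ 3)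

lemma one_le_greenConst {E : Type*} [SeminormedAddCommGroup E] [MeasurableSpace E]
    (μ : Measure E) (d : ℕ) {h : ℝ} (hh : 0 ≤ h) : 1 ≤ greenConst μ d h :=
  le_add_of_nonneg_right (by positivity)

lemma lt_div_sub_two_iff {D p : ℝ} (hD : 2 < D) : p < D / (D - 2) ↔ 0 < D - (D - 2) * p := by
  rw [lt_div_iff₀ (sub_pos.2 hD), sub_pos, mul_comm]

lemma div_sub_two_sub_le {D p : ℝ} (hD : 3 ≤ D) (hp : p ≤ D / (D - 2)) :
    D / (D - 2) - p ≤ D - (D - 2) * p := by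
  have h_factor : D - (D - 2) * p = (D - 2) * (D / (D - 2) - p) := by
    have : D - 2 ≠ 0 := by linarith
    field_simp
  rw [h_factor]
  exact le_mul_of_one_le_left (sub_nonneg.2 hp) (by linarith)

lemma div_sub_two_le_three {D : ℝ} (hD : 3 ≤ D) : D / (D - 2) ≤ 3 := by
  rw [div_le_iff₀] <;> linarith

variable {E : Type*} [NormedAddCommGroup E] [NormedSpace ℝ E] [FiniteDimensional ℝ E]
  [MeasurableSpace E] [BorelSpace E] (μ : Measure E) [μ.IsAddHaarMeasure]
  {d : ℕ} {Ω : Set E} {p h : ℝ}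

lemma lintegral_greenMajorant_rpow_le (hdim : finrank ℝ E = d) (hd : 3 ≤ d)
    (hΩ : MeasurableSet Ω) (hbdd : Bornology.IsBounded Ω) (hh : 1 ≤ h) (h_diam : diam Ω ≤ h)
    (hp : 0 < p) (hpd : p < d / ((d : ℝ) - 2)) {x : E} (hx : 0 < infDist x Ωᶜ) :
    ∫⁻ ξ in Ω, ENNReal.ofReal (greenMajorant d Ω x ξ) ^ p ∂μ ≤
      ENNReal.ofReal (greenConst μ d h *
        (cutoffRadius d p (infDist x Ωᶜ) ^ (d - (d - 2) * p) / (d - (d - 2) * p))) := by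
  have : Nontrivial E := nontrivial_of_finrank_pos (R := ℝ) (by lia)
  have hD : (3 : ℝ) ≤ d := by exact_mod_cast hd
  have hε : 0 < d - (d - 2) * p := (lt_div_sub_two_iff (by linarith)).1 hpd
  set δ := infDist x Ωᶜ
  set r := cutoffRadius d p δ
  have hr : 0 < r := cutoffRadius_pos hε hx
  set I := r ^ (d - (d - 2) * p) / (d - (d - 2) * p) with hI
  have hI_nonneg : 0 ≤ I := by positivity
  set ω := μ.real (ball (0 : E) 1)
  have h_far : (δ * h * r ^ (-(d : ℝ))) ^ p ≤ h ^ 3 * I := by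
    rw [hI, ← mul_cutoffRadius_rpow_neg_rpow (by linarith) hp hε hx, mul_right_comm, mul_comm,
      Real.mul_rpow (by positivity) (by positivity), ← Real.rpow_ofNat h]
    gcongr
    exact hpd.le.trans (div_sub_two_le_three hD)
  calc ∫⁻ ξ in Ω, ENNReal.ofReal (greenMajorant d Ω x ξ) ^ p ∂μ
      ≤ ENNReal.ofReal (d * ω * I) + ENNReal.ofReal ((δ * h * r ^ (-(d : ℝ))) ^ p) * μ Ω := by
        subst hdim
        exact lintegral_rpow_le_of_le_near_of_le_far μ hΩ (fun ξ _ ↦ greenMajorant_nonneg ..)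
          (by positivity) (by positivity) hp.le (by linarith) hr
          (fun ξ _ ↦ greenMajorant_le_dist_rpow ..)
          (fun ξ hξ ↦ greenMajorant_le_infDist_mul_dist_rpow _ _
            ((infDist_compl_le_diam hbdd hξ).trans h_diam))
    _ ≤ ENNReal.ofReal (d * ω * I) + ENNReal.ofReal (h ^ 3 * I) * ENNReal.ofReal (ω * h ^ d) := by
        gcongr
        exact hdim ▸ addHaar_le_of_diam_le μ hbdd h_diam
    _ = ENNReal.ofReal ((d * ω + ω * h ^ d * h ^ 3) * I) := by
        rw [← ENNReal.ofReal_mul (by positivity),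
          ← ENNReal.ofReal_add (by positivity) (by positivity)]
        ring_nf
    _ ≤ ENNReal.ofReal (greenConst μ d h * I) := by
        gcongr
        exact le_add_of_nonneg_left zero_le_one

lemma lintegral_greenMajorant_rpow_rpow_le (hdim : finrank ℝ E = d) (hd : 3 ≤ d)
    (hΩ : MeasurableSet Ω) (hbdd : Bornology.IsBounded Ω) (hh : 1 ≤ h) (h_diam : diam Ω ≤ h)
    (hp : 1 ≤ p) (hpd : p < d / ((d : ℝ) - 2)) (x : E) :
    (∫⁻ ξ in Ω, ENNReal.ofReal (greenMajorant d Ω x ξ) ^ p ∂μ) ^ (1 / p) ≤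
      ENNReal.ofReal (greenConst μ d h *
        (d / ((d : ℝ) - 2) - p) ^ (-((d : ℝ) / (d + 2 * p))) *
        infDist x Ωᶜ ^ ((d - (d - 2) * p) / (d + 2 * p))) := by
  have hp0 : 0 < p := by linarith
  obtain hx | hx := (infDist_nonneg : 0 ≤ infDist x Ωᶜ).eq_or_lt
  · simp [greenMajorant_of_infDist_eq_zero _ hx.symm, hp0]
  have hD : (3 : ℝ) ≤ d := by exact_mod_cast hd
  have hε : 0 < d - (d - 2) * p := (lt_div_sub_two_iff (by linarith)).1 hpd
  have hr := cutoffRadius_pos hε hx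
  set M := greenConst μ d h
  have hM : 1 ≤ M := one_le_greenConst μ d (zero_le_one.trans hh)
  calc (∫⁻ ξ in Ω, ENNReal.ofReal (greenMajorant d Ω x ξ) ^ p ∂μ) ^ (1 / p)
      ≤ ENNReal.ofReal (M * (cutoffRadius d p (infDist x Ωᶜ) ^ (d - (d - 2) * p) /
          (d - (d - 2) * p))) ^ (1 / p) := by
        gcongr
        exact lintegral_greenMajorant_rpow_le μ hdim hd hΩ hbdd hh h_diam hp0 hpd hx
    _ = ENNReal.ofReal (M ^ (1 / p) * (d - (d - 2) * p) ^ (-((d : ℝ) / (d + 2 * p))) *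
          infDist x Ωᶜ ^ ((d - (d - 2) * p) / (d + 2 * p))) := by
        rw [ENNReal.ofReal_rpow_of_nonneg (by positivity) (by positivity),
          Real.mul_rpow (by positivity) (by positivity),
          cutoffRadius_rpow_div_rpow (by linarith) hp0 hε hx, mul_assoc]
    _ ≤ _ := by
        gcongr ENNReal.ofReal (?_ * ?_ * _)
        · exact Real.rpow_le_self_of_one_le hM ((div_le_one hp0).2 hp)
        · exact Real.rpow_le_rpow_of_nonpos (sub_pos.2 hpd) (div_sub_two_sub_le hD hpd.le)
            (neg_nonpos.2 (by positivity))

lemma lintegral_enorm_rpow_rpow_le_of_le_greenMajorant (hdim : finrank ℝ E = d) (hd : 3 ≤ d)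
    (hΩ : MeasurableSet Ω) (hbdd : Bornology.IsBounded Ω) (hh : 1 ≤ h) (h_diam : diam Ω ≤ h)
    (hp : 1 ≤ p) (hpd : p < d / ((d : ℝ) - 2)) {C₀ : ℝ} (hC₀ : 0 ≤ C₀) {g : E → ℝ} {x : E}
    (hg : ∀ ξ ∈ Ω, x ≠ ξ → |g ξ| ≤ C₀ * greenMajorant d Ω x ξ) :
    (∫⁻ ξ in Ω, ‖g ξ‖ₑ ^ p ∂μ) ^ (1 / p) ≤
      ENNReal.ofReal (C₀ * (greenConst μ d h *
        (d / ((d : ℝ) - 2) - p) ^ (-((d : ℝ) / (d + 2 * p))) *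
        infDist x Ωᶜ ^ ((d - (d - 2) * p) / (d + 2 * p)))) := by
  have : Nontrivial E := nontrivial_of_finrank_pos (R := ℝ) (by lia)
  have hp0 : 0 < p := by linarith
  have h_pointwise : ∀ᵐ ξ ∂μ.restrict Ω,
      ‖g ξ‖ₑ ^ p ≤ ENNReal.ofReal C₀ ^ p * ENNReal.ofReal (greenMajorant d Ω x ξ) ^ p := by
    filter_upwards [ae_restrict_mem hΩ, ae_restrict_of_ae (Measure.ae_ne μ x)] with ξ hξ hξx
    rw [← ENNReal.mul_rpow_of_nonneg _ _ hp0.le, ← ENNReal.ofReal_mul hC₀,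
      Real.enorm_eq_ofReal_abs]
    gcongr
    exact hg ξ hξ hξx.symm
  calc (∫⁻ ξ in Ω, ‖g ξ‖ₑ ^ p ∂μ) ^ (1 / p)
      ≤ (ENNReal.ofReal C₀ ^ p *
          ∫⁻ ξ in Ω, ENNReal.ofReal (greenMajorant d Ω x ξ) ^ p ∂μ) ^ (1 / p) := by
        rw [← lintegral_const_mul' _ _ (by finiteness)]
        exact ENNReal.rpow_le_rpow (lintegral_mono_ae h_pointwise) (by positivity)
    _ = ENNReal.ofReal C₀ *
          (∫⁻ ξ in Ω, ENNReal.ofReal (greenMajorant d Ω x ξ) ^ p ∂μ) ^ (1 / p) := by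
        rw [ENNReal.mul_rpow_of_nonneg _ _ (by positivity), ← ENNReal.rpow_mul,
          mul_one_div_cancel hp0.ne', ENNReal.rpow_one]
    _ ≤ _ := by
        rw [ENNReal.ofReal_mul hC₀]
        gcongr
        exact lintegral_greenMajorant_rpow_rpow_le μ hdim hd hΩ hbdd hh h_diam hp hpd x

end GreenMajorantLpNorm

section Eigenfunctions

lemma one_le_enorm_mul_lintegral_rpow_of_eigenfunction {X : Type*} [MeasurableSpace X]
    {ν : Measure X} {p q : ℝ} (hpq : p.HolderConjugate q) {k : X → X → ℝ} {ρ u : X → ℝ} {lam : ℝ}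
    {B : X → ℝ≥0∞} (hk : ∀ᵐ x ∂ν, AEMeasurable (k x) ν)
    (hρu : AEMeasurable (fun x ↦ ρ x * u x) ν)
    (hB : ∀ᵐ x ∂ν, (∫⁻ ξ, ‖k x ξ‖ₑ ^ p ∂ν) ^ (1 / p) ≤ B x)
    (h_zero : ∫⁻ x, ‖ρ x * u x‖ₑ ^ q ∂ν ≠ 0) (h_top : ∫⁻ x, ‖ρ x * u x‖ₑ ^ q ∂ν ≠ ⊤)
    (h_eigen : ∀ᵐ x ∂ν, u x = lam * ∫ ξ, k x ξ * ρ ξ * u ξ ∂ν) :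
    1 ≤ ‖lam‖ₑ * (∫⁻ x, (‖ρ x‖ₑ * B x) ^ q ∂ν) ^ (1 / q) := by
  set I := ∫⁻ x, ‖ρ x * u x‖ₑ ^ q ∂ν
  have hq : 0 < q := hpq.symm.pos
  have h_pointwise : ∀ᵐ x ∂ν,
      ‖ρ x * u x‖ₑ ^ q ≤ ‖lam‖ₑ ^ q * I * (‖ρ x‖ₑ * B x) ^ q := by
    filter_upwards [hk, hB, h_eigen] with x hkx hBx hux
    have h_holder : ‖∫ ξ, k x ξ * ρ ξ * u ξ ∂ν‖ₑ ≤ B x * I ^ (1 / q) :=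
      calc ‖∫ ξ, k x ξ * ρ ξ * u ξ ∂ν‖ₑ ≤ ∫⁻ ξ, ‖k x ξ * ρ ξ * u ξ‖ₑ ∂ν :=
            enorm_integral_le_lintegral_enorm _
        _ = ∫⁻ ξ, ‖k x ξ‖ₑ * ‖ρ ξ * u ξ‖ₑ ∂ν := by simp only [mul_assoc, enorm_mul]
        _ ≤ (∫⁻ ξ, ‖k x ξ‖ₑ ^ p ∂ν) ^ (1 / p) * I ^ (1 / q) :=
            ENNReal.lintegral_mul_le_Lp_mul_Lq ν hpq hkx.enorm hρu.enorm
        _ ≤ B x * I ^ (1 / q) := by gcongr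
    calc ‖ρ x * u x‖ₑ ^ q ≤ (‖ρ x‖ₑ * (‖lam‖ₑ * (B x * I ^ (1 / q)))) ^ q := by
          rw [enorm_mul, hux, enorm_mul]
          gcongr
      _ = ‖lam‖ₑ ^ q * I * (‖ρ x‖ₑ * B x) ^ q := by
          simp only [ENNReal.mul_rpow_of_nonneg _ _ hq.le, ← ENNReal.rpow_mul,
            one_div_mul_cancel hq.ne', ENNReal.rpow_one]
          ring
  have h_absorb : I * 1 ≤ I * (‖lam‖ₑ ^ q * ∫⁻ x, (‖ρ x‖ₑ * B x) ^ q ∂ν) :=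
    calc I * 1 ≤ ∫⁻ x, ‖lam‖ₑ ^ q * I * (‖ρ x‖ₑ * B x) ^ q ∂ν := by
          rw [mul_one]
          exact lintegral_mono_ae h_pointwise
      _ = I * (‖lam‖ₑ ^ q * ∫⁻ x, (‖ρ x‖ₑ * B x) ^ q ∂ν) := by
          rw [lintegral_const_mul' _ _ (ENNReal.mul_ne_top (by finiteness) h_top)]
          ring
  have h_one := (ENNReal.mul_le_mul_iff_right h_zero h_top).1 h_absorb
  calc (1 : ℝ≥0∞) ≤ (‖lam‖ₑ ^ q * ∫⁻ x, (‖ρ x‖ₑ * B x) ^ q ∂ν) ^ (1 / q) :=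
        ENNReal.one_le_rpow h_one (by positivity)
    _ = ‖lam‖ₑ * (∫⁻ x, (‖ρ x‖ₑ * B x) ^ q ∂ν) ^ (1 / q) := by
        rw [ENNReal.mul_rpow_of_nonneg _ _ (by positivity), ← ENNReal.rpow_mul,
          mul_one_div_cancel hq.ne', ENNReal.rpow_one]

lemma lintegral_mul_ofReal_rpow_rpow {X : Type*} [MeasurableSpace X] (ν : Measure X) {q A θ : ℝ}
    (hq : 0 < q) (hA : 0 ≤ A) (ρ : X → ℝ) {δ : X → ℝ} (hδ : ∀ x, 0 ≤ δ x) :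
    (∫⁻ x, (‖ρ x‖ₑ * ENNReal.ofReal (A * δ x ^ θ)) ^ q ∂ν) ^ (1 / q) =
      ENNReal.ofReal A * (∫⁻ x, ‖ρ x‖ₑ ^ q * ENNReal.ofReal (δ x ^ (q * θ)) ∂ν) ^ (1 / q) := by
  have h_integrand (x : X) : (‖ρ x‖ₑ * ENNReal.ofReal (A * δ x ^ θ)) ^ q =
      ENNReal.ofReal A ^ q * (‖ρ x‖ₑ ^ q * ENNReal.ofReal (δ x ^ (q * θ))) := by
    rw [ENNReal.ofReal_mul hA, ENNReal.mul_rpow_of_nonneg _ _ hq.le,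
      ENNReal.mul_rpow_of_nonneg _ _ hq.le, mul_comm q θ, Real.rpow_mul (hδ x),
      ENNReal.ofReal_rpow_of_nonneg (Real.rpow_nonneg (hδ x) θ) hq.le]
    ring
  simp only [h_integrand]
  rw [lintegral_const_mul' _ _ (by finiteness), ENNReal.mul_rpow_of_nonneg _ _ (by positivity),
    ← ENNReal.rpow_mul, mul_one_div_cancel hq.ne', ENNReal.rpow_one]

lemma ofReal_inv_mul_rpow_neg_le {A q : ℝ} {lam W : ℝ≥0∞} (hA : 0 < A)
    (h : 1 ≤ lam * (ENNReal.ofReal A * W ^ (1 / q))) :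
    ENNReal.ofReal A⁻¹ * W ^ (-1 / q) ≤ lam := by
  rw [ENNReal.ofReal_inv_of_pos hA, neg_div, ENNReal.rpow_neg,
    ← ENNReal.mul_inv (.inl (by simpa)) (.inl ENNReal.ofReal_ne_top), ← one_div]
  exact ENNReal.div_le_of_le_mul h

lemma exists_mul_setLIntegral_rpow_le_enorm_of_eigenfunction {E : Type*} [NormedAddCommGroup E]
    [NormedSpace ℝ E] [FiniteDimensional ℝ E] [MeasurableSpace E] [BorelSpace E]
    (μ : Measure E) [μ.IsAddHaarMeasure] (d : ℕ) (hdim : finrank ℝ E = d) (hd : 3 ≤ d)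
    (C₀ : ℝ) (hC₀ : 0 < C₀) (H : ℝ) :
    ∃ C : ℝ, 0 < C ∧
      ∀ (Ω : Set E) (ρ : E → ℝ) (G : E → E → ℝ) (p q : ℝ) (u : E → ℝ) (lam : ℝ),
        MeasurableSet Ω → Bornology.IsBounded Ω → diam Ω ≤ H →
        (∀ x ∈ Ω, AEMeasurable (G x) (μ.restrict Ω)) →
        (∀ x ∈ Ω, ∀ ξ ∈ Ω, x ≠ ξ → |G x ξ| ≤ C₀ * greenMajorant d Ω x ξ) →
        1 < p → p < d / ((d : ℝ) - 2) → q = p / (p - 1) →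
        AEMeasurable (fun x ↦ ρ x * u x) (μ.restrict Ω) →
        ∫⁻ x in Ω, ‖ρ x * u x‖ₑ ^ q ∂μ ≠ 0 → ∫⁻ x in Ω, ‖ρ x * u x‖ₑ ^ q ∂μ ≠ ⊤ →
        (∀ᵐ x ∂μ.restrict Ω, u x = lam * ∫ ξ in Ω, G x ξ * ρ ξ * u ξ ∂μ) →
        ENNReal.ofReal (C * (d / ((d : ℝ) - 2) - p) ^ ((d : ℝ) / (d + 2 * p))) *
          (∫⁻ x in Ω, ‖ρ x‖ₑ ^ q * ENNReal.ofReal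
            (infDist x Ωᶜ ^ (q * (d - (d - 2) * p) / (d + 2 * p))) ∂μ) ^ (-1 / q) ≤ ‖lam‖ₑ := by
  have hh : 1 ≤ max 1 H := le_max_left 1 H
  set M := greenConst μ d (max 1 H)
  have hM : 0 < M := zero_lt_one.trans_le (one_le_greenConst μ d (zero_le_one.trans hh))
  refine ⟨(C₀ * M)⁻¹, by positivity, ?_⟩
  intro Ω ρ G p q u lam hΩ hbdd h_diam hG h_green hp hpd hq hρu h_zero h_top h_eigen
  have hpq : p.HolderConjugate q := (Real.holderConjugate_iff_eq_conjExponent hp).2 hq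
  have hη : 0 < d / ((d : ℝ) - 2) - p := sub_pos.2 hpd
  set A := C₀ * M * (d / ((d : ℝ) - 2) - p) ^ (-((d : ℝ) / (d + 2 * p))) with hA
  have hA_pos : 0 < A := by positivity
  have hA_inv : (C₀ * M)⁻¹ * (d / ((d : ℝ) - 2) - p) ^ ((d : ℝ) / (d + 2 * p)) = A⁻¹ := by
    simp only [hA, Real.rpow_neg hη.le, mul_inv, inv_inv]
  have h_kernel : ∀ᵐ x ∂μ.restrict Ω, (∫⁻ ξ in Ω, ‖G x ξ‖ₑ ^ p ∂μ) ^ (1 / p) ≤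
      ENNReal.ofReal (A * infDist x Ωᶜ ^ ((d - (d - 2) * p) / (d + 2 * p))) := by
    filter_upwards [ae_restrict_mem hΩ] with x hx
    simpa only [hA, mul_assoc] using lintegral_enorm_rpow_rpow_le_of_le_greenMajorant μ hdim hd hΩ
      hbdd hh (h_diam.trans (le_max_right 1 H)) hp.le hpd hC₀.le (h_green x hx)
  have h_one := one_le_enorm_mul_lintegral_rpow_of_eigenfunction hpq
    (ae_restrict_of_forall_mem hΩ hG) hρu h_kernel h_zero h_top h_eigen
  rw [lintegral_mul_ofReal_rpow_rpow _ hpq.symm.pos hA_pos.le ρ fun x ↦ infDist_nonneg] at h_one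
  rw [hA_inv, mul_div_assoc]
  exact ofReal_inv_mul_rpow_neg_le hA_pos h_one

end Eigenfunctions

section PiecewiseConstantDensity

variable {X ι : Type*} [MeasurableSpace X] {ν : Measure X} {K : ι → Set X} {ρ : X → ℝ} {c : ι → ℝ}

lemma aemeasurable_restrict_iUnion_of_forall_eq [Countable ι] (hK : ∀ i, MeasurableSet (K i))
    (hρ : ∀ i, ∀ x ∈ K i, ρ x = c i) : AEMeasurable ρ (ν.restrict (⋃ i, K i)) :=
  aemeasurable_iUnion_iff.2 fun i ↦
    aemeasurable_const.congr <| ae_restrict_of_forall_mem (hK i) fun x hx ↦ (hρ i x hx).symm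

lemma setLIntegral_iUnion_le_sum [Fintype ι] {f : X → ℝ≥0∞} {b : ι → ℝ≥0∞}
    (hf : ∀ i, ∀ x ∈ K i, f x ≤ b i) : ∫⁻ x in ⋃ i, K i, f x ∂ν ≤ ∑ i, b i * ν (K i) :=
  calc ∫⁻ x in ⋃ i, K i, f x ∂ν ≤ ∑ i, ∫⁻ x in K i, f x ∂ν := by
        simpa only [tsum_fintype] using lintegral_iUnion_le K f
    _ ≤ ∑ i, b i * ν (K i) := by
        gcongr with i
        exact (setLIntegral_mono measurable_const (hf i)).trans_eq (setLIntegral_const ..)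

lemma setLIntegral_weight_le_sum_iSup [Fintype ι] {δ : X → ℝ} {q s : ℝ} (hq : 0 ≤ q) (hs : 0 ≤ s)
    (hρ : ∀ i, ∀ x ∈ K i, ρ x = c i) (hδ : ∀ x, 0 ≤ δ x)
    (hδ_bdd : ∀ i, BddAbove (Set.range fun x : K i ↦ δ x)) (hν : ∀ i, ν (K i) ≠ ⊤) :
    ∫⁻ x in ⋃ i, K i, ‖ρ x‖ₑ ^ q * ENNReal.ofReal (δ x ^ s) ∂ν ≤
      ENNReal.ofReal (∑ i, |c i| ^ q * (ν (K i)).toReal * (⨆ x : K i, δ x) ^ s) := by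
  have h_sup (i : ι) : 0 ≤ ⨆ x : K i, δ x := Real.iSup_nonneg fun x ↦ hδ x
  have h_pointwise : ∀ i, ∀ x ∈ K i, ‖ρ x‖ₑ ^ q * ENNReal.ofReal (δ x ^ s) ≤
      ENNReal.ofReal (|c i| ^ q * (⨆ x : K i, δ x) ^ s) := by
    intro i x hx
    have h_le : δ x ≤ ⨆ x : K i, δ x := le_ciSup (hδ_bdd i) ⟨x, hx⟩
    rw [hρ i x hx, Real.enorm_eq_ofReal_abs, ENNReal.ofReal_rpow_of_nonneg (abs_nonneg _) hq,
      ← ENNReal.ofReal_mul (Real.rpow_nonneg (abs_nonneg _) q)]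
    gcongr
    exact hδ x
  refine (setLIntegral_iUnion_le_sum h_pointwise).trans_eq ?_
  have h_term (i : ι) : 0 ≤ |c i| ^ q * (⨆ x : K i, δ x) ^ s :=
    mul_nonneg (Real.rpow_nonneg (abs_nonneg _) q) (Real.rpow_nonneg (h_sup i) s)
  simp only [mul_right_comm _ (ν _).toReal]
  rw [ENNReal.ofReal_sum_of_nonneg fun i _ ↦ mul_nonneg (h_term i) ENNReal.toReal_nonneg]
  simp only [ENNReal.ofReal_mul (h_term _), ENNReal.ofReal_toReal (hν _)]

lemma lintegral_enorm_mul_rpow_eq {u : X → ℝ} {q : ℝ} (hq : 0 ≤ q) (hρ : ∀ᵐ x ∂ν, 0 ≤ ρ x)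
    (hu : ∀ᵐ x ∂ν, 0 ≤ u x) :
    ∫⁻ x, ‖ρ x * u x‖ₑ ^ q ∂ν = ∫⁻ x, ENNReal.ofReal (ρ x ^ q * u x ^ q) ∂ν := by
  refine lintegral_congr_ae ?_
  filter_upwards [hρ, hu] with x hρx hux
  rw [← Real.mul_rpow hρx hux, Real.enorm_eq_ofReal (mul_nonneg hρx hux),
    ENNReal.ofReal_rpow_of_nonneg (mul_nonneg hρx hux) hq]

lemma bddAbove_range_infDist {Y : Type*} [PseudoMetricSpace Y] {t : Set Y}
    (ht : Bornology.IsBounded t) (s : Set Y) :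
    BddAbove (Set.range fun x : t ↦ infDist (x : Y) s) := by
  simpa only [Set.image_eq_range] using ((lipschitz_infDist_pt s).isBounded_image ht).bddAbove

lemma mul_rpow_le_of_ofReal_mul_rpow_le {a y S lam : ℝ} {W : ℝ≥0∞} (ha : 0 ≤ a) (hy : y < 0)
    (hS : 0 ≤ S) (hW : W ≤ ENNReal.ofReal S)
    (h : ENNReal.ofReal a * W ^ y ≤ ‖lam‖ₑ) : a * S ^ y ≤ |lam| := by
  obtain rfl | hS := hS.eq_or_lt
  · simp only [Real.zero_rpow hy.ne, mul_zero, abs_nonneg]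
  have hWy : ENNReal.ofReal S ^ y ≤ W ^ y := by
    rw [← neg_neg y, ENNReal.rpow_neg, ENNReal.rpow_neg _ (-y), ENNReal.inv_le_inv]
    exact ENNReal.rpow_le_rpow hW (neg_nonneg.2 hy.le)
  rw [← ENNReal.ofReal_le_ofReal_iff (abs_nonneg lam), ENNReal.ofReal_mul ha,
    ← ENNReal.ofReal_rpow_of_pos hS, ← Real.enorm_eq_ofReal_abs]
  exact (mul_le_mul_right hWy _).trans h

theorem eigenvalue_lower_bound_high_dim_general {E : Type*} [NormedAddCommGroup E]
    [NormedSpace ℝ E] [FiniteDimensional ℝ E] [MeasurableSpace E] [BorelSpace E]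
    (μ : Measure E) [μ.IsAddHaarMeasure] (d : ℕ) (hdim : finrank ℝ E = d) (hd : 3 ≤ d)
    (C₀ : ℝ) (hC₀ : 0 < C₀) (H : ℝ) :
    ∃ C : ℝ, 0 < C ∧
      ∀ (Ω : Set E) (N : ℕ) (K : Fin N → Set E) (c : Fin N → ℝ) (ρ : E → ℝ) (G : E → E → ℝ)
        (p q : ℝ) (u : E → ℝ) (lam : ℝ),
        Bornology.IsBounded Ω → diam Ω ≤ H →
        (∀ i, MeasurableSet (K i)) → (⋃ i, K i) = Ω → (∀ i, ∀ x ∈ K i, ρ x = c i) →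
        (∀ x ∈ Ω, AEMeasurable (G x) (μ.restrict Ω)) →
        (∀ x ∈ Ω, ∀ ξ ∈ Ω, x ≠ ξ → |G x ξ| ≤ C₀ * greenMajorant d Ω x ξ) →
        1 < p → p < d / ((d : ℝ) - 2) → q = p / (p - 1) →
        AEMeasurable u (μ.restrict Ω) →
        ∫⁻ x in Ω, ‖ρ x * u x‖ₑ ^ q ∂μ ≠ 0 → ∫⁻ x in Ω, ‖ρ x * u x‖ₑ ^ q ∂μ ≠ ⊤ →
        (∀ᵐ x ∂μ.restrict Ω, u x = lam * ∫ ξ in Ω, G x ξ * ρ ξ * u ξ ∂μ) →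
        C * (d / ((d : ℝ) - 2) - p) ^ ((d : ℝ) / (d + 2 * p)) *
          (∑ i, |c i| ^ q * (μ (K i)).toReal *
            (⨆ x : K i, infDist (x : E) Ωᶜ) ^ (q * (d - (d - 2) * p) / (d + 2 * p))) ^
              (-1 / q) ≤ |lam| := by
  obtain ⟨C, hC, h_bound⟩ :=
    exists_mul_setLIntegral_rpow_le_enorm_of_eigenfunction μ d hdim hd C₀ hC₀ H
  refine ⟨C, hC, ?_⟩
  intro Ω N K c ρ G p q u lam hbdd h_diam hK hKΩ hρ hG h_green hp hpd hq hu h_zero h_top h_eigen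
  have hΩ : MeasurableSet Ω := hKΩ ▸ MeasurableSet.iUnion hK
  have hρ_meas : AEMeasurable ρ (μ.restrict Ω) :=
    hKΩ ▸ aemeasurable_restrict_iUnion_of_forall_eq hK hρ
  have hq_pos : 0 < q := ((Real.holderConjugate_iff_eq_conjExponent hp).2 hq).symm.pos
  have hD : (3 : ℝ) ≤ d := by exact_mod_cast hd
  have hε : 0 < d - (d - 2) * p := (lt_div_sub_two_iff (by linarith)).1 hpd
  have hK_bdd (i : Fin N) : Bornology.IsBounded (K i) :=
    hbdd.subset (hKΩ ▸ Set.subset_iUnion K i)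
  have h_weight := setLIntegral_weight_le_sum_iSup (ν := μ) (δ := fun x ↦ infDist x Ωᶜ) hq_pos.le
    (s := q * (d - (d - 2) * p) / (d + 2 * p)) (by positivity) hρ (fun x ↦ infDist_nonneg)
    (fun i ↦ bddAbove_range_infDist (hK_bdd i) Ωᶜ) fun i ↦ (hK_bdd i).measure_lt_top.ne
  rw [hKΩ] at h_weight
  have h_sum_nonneg : 0 ≤ ∑ i, |c i| ^ q * (μ (K i)).toReal *
      (⨆ x : K i, infDist (x : E) Ωᶜ) ^ (q * (d - (d - 2) * p) / (d + 2 * p)) :=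
    Finset.sum_nonneg fun i _ ↦ mul_nonneg (by positivity)
      (Real.rpow_nonneg (Real.iSup_nonneg fun _ ↦ infDist_nonneg) _)
  exact mul_rpow_le_of_ofReal_mul_rpow_le
    (mul_nonneg hC.le (Real.rpow_nonneg (sub_pos.2 hpd).le _))
    (div_neg_of_neg_of_pos (by norm_num) hq_pos) h_sum_nonneg h_weight <|
    h_bound Ω ρ G p q u lam hΩ hbdd h_diam hG h_green hp hpd hq (hρ_meas.mul hu) h_zero h_top
      h_eigen

end PiecewiseConstantDensity

/-- Lower bound, in dimension `d ≥ 3`, for the smallest eigenvalue of the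
density-weighted eigenvalue problem `-Δu = λ ρ u` with homogeneous Dirichlet
boundary conditions, via the Riesz-type Green's-function bound.  The constant
`C` depends only on `d`, `C₀` and the diameter `H` of `Ω`, but not on `p`, the
partition, `ρ`, `u` or `λ`. -/
theorem eigenvalue_lower_bound_high_dim
    (d : ℕ) (hd : 3 ≤ d) (C₀ : ℝ) (hC₀ : 0 < C₀) (H : ℝ) :
    ∃ C : ℝ, 0 < C ∧
      ∀ (Ω : Set (EuclideanSpace ℝ (Fin d))) (N : ℕ)
        (K : Fin N → Set (EuclideanSpace ℝ (Fin d))) (ρv : Fin N → ℝ)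
        (ρ : EuclideanSpace ℝ (Fin d) → ℝ)
        (G : EuclideanSpace ℝ (Fin d) → EuclideanSpace ℝ (Fin d) → ℝ)
        (p q : ℝ) (u : EuclideanSpace ℝ (Fin d) → ℝ) (lam : ℝ),
        IsOpen Ω → Bornology.IsBounded Ω → Metric.diam Ω = H →
        (∀ i, MeasurableSet (K i)) → Pairwise (Function.onFun Disjoint K) →
        (⋃ i, K i) = Ω →
        (∀ i, 0 < ρv i) → (∀ i, ∀ x ∈ K i, ρ x = ρv i) →
        (∫ x in Ω, ρ x) = 1 →
        Measurable (Function.uncurry G) →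
        (∀ x ∈ Ω, ∀ ξ ∈ Ω, x ≠ ξ → 0 ≤ G x ξ ∧
          G x ξ ≤ C₀ * dist x ξ ^ ((2 : ℝ) - d) *
            min 1 (Metric.infDist x Ωᶜ * Metric.infDist ξ Ωᶜ / dist x ξ ^ 2)) →
        1 < p → p < (d : ℝ) / ((d : ℝ) - 2) → q = p / (p - 1) →
        0 < lam → Measurable u →
        (∀ᵐ x ∂(volume.restrict Ω), 0 < u x) →
        0 < (∫⁻ x in Ω, ENNReal.ofReal (ρ x ^ q * u x ^ q)) →
        (∫⁻ x in Ω, ENNReal.ofReal (ρ x ^ q * u x ^ q)) < ⊤ →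
        (∀ᵐ x ∂(volume.restrict Ω),
          u x = lam * ∫ ξ in Ω, G x ξ * ρ ξ * u ξ) →
        C * ((d : ℝ) / ((d : ℝ) - 2) - p) ^ ((d : ℝ) / ((d : ℝ) + 2 * p)) *
          (∑ i, ρv i ^ q * (volume (K i)).toReal *
            (⨆ x : K i, Metric.infDist (x : EuclideanSpace ℝ (Fin d)) Ωᶜ) ^
              (q * ((d : ℝ) - ((d : ℝ) - 2) * p) / ((d : ℝ) + 2 * p))) ^
            (-(1 : ℝ) / q) ≤ lam := by
  obtain ⟨C, hC, h_bound⟩ := eigenvalue_lower_bound_high_dim_general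
    (volume : Measure (EuclideanSpace ℝ (Fin d))) d finrank_euclideanSpace_fin hd C₀ hC₀ H
  refine ⟨C, hC, ?_⟩
  intro Ω N K c ρ G p q u lam h_open hbdd h_diam hK _ hKΩ hc hρ _ hG h_green hp hpd hq hlam hu
    hu_pos h_zero h_top h_eigen
  have hq_pos : 0 < q := ((Real.holderConjugate_iff_eq_conjExponent hp).2 hq).symm.pos
  have hρ_nonneg : ∀ x ∈ Ω, 0 ≤ ρ x := by
    simp only [← hKΩ, Set.mem_iUnion, forall_exists_index]
    exact fun x i hx ↦ hρ i x hx ▸ (hc i).le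
  have h_kernel : ∀ x ∈ Ω, ∀ ξ ∈ Ω, x ≠ ξ → |G x ξ| ≤ C₀ * greenMajorant d Ω x ξ := by
    intro x hx ξ hξ hne
    rw [abs_of_nonneg (h_green x hx ξ hξ hne).1, greenMajorant, ← mul_assoc]
    exact (h_green x hx ξ hξ hne).2
  rw [← lintegral_enorm_mul_rpow_eq hq_pos.le (ae_restrict_of_forall_mem h_open.measurableSet
    hρ_nonneg) (hu_pos.mono fun x ↦ le_of_lt)] at h_zero h_top
  simpa only [abs_of_pos (hc _), abs_of_pos hlam] using h_bound Ω N K c ρ G p q u lam hbdd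
    h_diam.le hK hKΩ hρ (fun x _ ↦ (hG.comp measurable_prodMk_left).aemeasurable) h_kernel hp hpd
    hq hu.aemeasurable h_zero.ne' h_top.ne h_eigen
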